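/- Fix p ∈ (1/2, 1). For every A > 0 there exist c > 0 and k_0 such that for all λ > 0 and all integers k ≥ k_0 with |k − log_{1/√(pq)} λ| ≤ A k^{1/2}, one has E X̄_k(λ) − E X̄_{k+1}(λ) > c k^{−1/2}. -/

import Mathlib

/-!
Poissonized model for partial fillup in tries (Janson–Szpankowski).

An outcome `ω : ℕ × (ℕ → ℕ → Bool)` consists of the number `ω.1 = N` of inserted
strings and a source `ω.2` of infinitely many strings, where `ω.2 i j` is the `j`-th
bit of the `i`-th string; the inserted strings are the strings `0, …, N-1`.  Under the
Poissonized measure, `N ~ Po(λ)` is independent of the strings, and all bits are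
i.i.d. with `P(bit = 1) = p`.
-/

open MeasureTheory ProbabilityTheory Real Filter

/-- The number of strings among the first `n` (encoded in `ω`) whose first `k` bits
form the word `r ∈ {0,1}^k`. -/
def prefCount (ω : ℕ → ℕ → Bool) (n k : ℕ) (r : Fin k → Bool) : ℕ :=
  ((Finset.range n).filter fun i => ∀ j : Fin k, ω i j = r j).card

/-- `X_k`: the number of words `r ∈ {0,1}^k` that are prefixes of at least two of the
first `n` strings. -/
def fillCount (ω : ℕ → ℕ → Bool) (n k : ℕ) : ℕ :=
  (Finset.univ.filter fun r : Fin k → Bool => 2 ≤ prefCount ω n k r).card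

/-- `ν` is a probability measure on `ℕ → ℕ → Bool` under which all the bits
`ω i j` are i.i.d. with `P(bit = 1) = p` (characterized by cylinder probabilities). -/
def IIDBits (p : ℝ) (ν : Measure (ℕ → ℕ → Bool)) : Prop :=
  IsProbabilityMeasure ν ∧
    ∀ (S : Finset (ℕ × ℕ)) (b : ℕ × ℕ → Bool),
      ν {ω | ∀ s ∈ S, ω s.1 s.2 = b s} =
        ∏ s ∈ S, ENNReal.ofReal (if b s then p else 1 - p)

/-- The Poissonized model: the number of inserted strings is `Po(λ)`, independent of the
i.i.d. source `ν` of strings. -/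
noncomputable def poModel (lam : NNReal) (ν : Measure (ℕ → ℕ → Bool)) :
    Measure (ℕ × (ℕ → ℕ → Bool)) :=
  (ProbabilityTheory.poissonMeasure lam).prod ν

/-- `X_k(λ)` as a random variable on the Poissonized model: the number of words
`r ∈ {0,1}^k` that are prefixes of at least two of the `N` inserted strings. -/
def fillCountPo (k : ℕ) (ω : ℕ × (ℕ → ℕ → Bool)) : ℕ :=
  fillCount ω.2 ω.1 k

/-- `X̄_k(λ) = X_k(λ) / 2^k`. -/
noncomputable def fracFilledPo (k : ℕ) (ω : ℕ × (ℕ → ℕ → Bool)) : ℝ :=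
  (fillCountPo k ω : ℝ) / 2 ^ k

/-!
By Poisson thinning, the number of inserted strings starting with a word `r` is Poisson with mean
`λ P(r)`. Splitting each word of length `k + 1` into its first bit and the rest gives
`E X̄_k - E X̄_{k+1} = 2 ^ (-k) ∑ j, C(k, j) h(λ p ^ j q ^ (k - j))`, where the continuous function
`h` is positive on `(0, ∞)`. Since `p ≠ q` and `k` is within `O(√k)` of `log_{1/√(pq)} λ`, there is
a `j` within `O(√k)` of `k / 2` for which `λ p ^ j q ^ (k - j)` lies in a fixed compact subset of
`(0, ∞)`. The term of this `j` alone has order `C(k, j) / 2 ^ k`, which is at least of order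
`1 / √k`.
-/

section Binomial

lemma four_pow_sq_le_mul_centralBinom_sq {n : ℕ} (hn : 1 ≤ n) :
    (4 ^ n) ^ 2 ≤ 4 * n * n.centralBinom ^ 2 := by
  induction n, hn using Nat.le_induction with
  | base => simp [Nat.centralBinom]
  | succ n _ ih =>
    refine Nat.le_of_mul_le_mul_left ?_ n.succ_pos
    calc (n + 1) * (4 ^ (n + 1)) ^ 2 = 16 * (n + 1) * (4 ^ n) ^ 2 := by ring
      _ ≤ 16 * (n + 1) * (4 * n * n.centralBinom ^ 2) := by gcongr
      _ ≤ 4 * (2 * (2 * n + 1) * n.centralBinom) ^ 2 := by nlinarith [sq_nonneg n.centralBinom]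
      _ = (n + 1) * (4 * (n + 1) * (n + 1).centralBinom ^ 2) := by
        rw [← Nat.succ_mul_centralBinom_succ]; ring

lemma two_mul_choose_two_mul_add_one (t : ℕ) :
    2 * (2 * t + 1).choose (t + 1) = (t + 1).centralBinom := by
  rw [Nat.centralBinom, show 2 * (t + 1) = 2 * t + 1 + 1 by ring,
    Nat.choose_succ_succ (2 * t + 1) t, Nat.succ_eq_add_one, Nat.choose_symm_half, two_mul]

lemma two_pow_sq_le_mul_choose_half_sq {k : ℕ} (hk : 1 ≤ k) :
    (2 ^ k) ^ 2 ≤ 4 * k * k.choose ((k + 1) / 2) ^ 2 := by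
  rcases Nat.even_or_odd' k with ⟨t, rfl | rfl⟩
  · have central := four_pow_sq_le_mul_centralBinom_sq (n := t) (by lia)
    rw [show (2 * t + 1) / 2 = t by lia, ← Nat.centralBinom_eq_two_mul_choose, pow_mul]
    norm_num only
    linarith [Nat.zero_le (4 * t * t.centralBinom ^ 2)]
  · have central := four_pow_sq_le_mul_centralBinom_sq (n := t + 1) (by lia)
    rw [← two_mul_choose_two_mul_add_one] at central
    rw [show (2 * t + 1 + 1) / 2 = t + 1 by lia]
    have four_pow : (4 ^ (t + 1)) ^ 2 = 4 * (2 ^ (2 * t + 1)) ^ 2 := by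
      rw [show 4 = 2 ^ 2 by norm_num, ← pow_mul, ← pow_mul, ← pow_mul, ← pow_add]
      congr 1
      ring
    nlinarith [Nat.zero_le (t * (2 * t + 1).choose (t + 1) ^ 2)]

lemma two_pow_div_two_mul_sqrt_le_choose_half {k : ℕ} (hk : 1 ≤ k) :
    (2 : ℝ) ^ k / (2 * √k) ≤ k.choose ((k + 1) / 2) := by
  have hk_pos : (0 : ℝ) < k := by exact_mod_cast hk
  rw [div_le_iff₀ (by positivity)]
  refine le_of_sq_le_sq ?_ (by positivity)
  calc ((2 : ℝ) ^ k) ^ 2 ≤ 4 * k * (k.choose ((k + 1) / 2) : ℝ) ^ 2 := by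
        exact_mod_cast two_pow_sq_le_mul_choose_half_sq hk
    _ = (k.choose ((k + 1) / 2) * (2 * √k)) ^ 2 := by
        rw [mul_pow, mul_pow, Real.sq_sqrt hk_pos.le]; ring

-- The ratio `choose k (i + 1) / choose k i = (k - i) / (i + 1)` decreases in `i`, so a lower bound
-- `c` on the last of the `l` ratios bounds them all.
lemma choose_mul_pow_le_choose_add {k m l : ℕ} {c : ℝ} (hc : 0 ≤ c)
    (h : c * (m + l) ≤ k + 1 - (m + l)) : (k.choose m : ℝ) * c ^ l ≤ k.choose (m + l) := by
  induction l with
  | zero => simp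
  | succ l ih =>
    push_cast at h
    have : (0 : ℝ) ≤ m + l := by positivity
    have ratio : (k.choose (m + l + 1) : ℝ) * (m + l + 1) = k.choose (m + l) * (k - (m + l)) := by
      have hmlk : m + l ≤ k := by
        rify
        nlinarith
      have cast_sub : ((k - (m + l) : ℕ) : ℝ) = k - (m + l) := by push_cast [hmlk]; rfl
      rw [← cast_sub]
      exact_mod_cast Nat.choose_succ_right_eq k (m + l)
    refine le_of_mul_le_mul_right ?_ (by positivity : (0 : ℝ) < m + l + 1)
    calc (k.choose m : ℝ) * c ^ (l + 1) * (m + l + 1)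
        = k.choose m * c ^ l * (c * (m + l + 1)) := by ring
      _ ≤ k.choose (m + l) * (k - (m + l)) := by
        gcongr
        · exact ih (by linarith)
        · linarith
      _ = k.choose (m + l + 1) * (m + l + 1) := ratio.symm

lemma exp_neg_two_mul_le_one_sub {d : ℝ} (hd0 : 0 ≤ d) (hd : d ≤ 1 / 2) :
    Real.exp (-(2 * d)) ≤ 1 - d := by
  rw [Real.exp_neg, inv_le_iff_one_le_mul₀' (Real.exp_pos _)]
  nlinarith [Real.add_one_le_exp (2 * d)]

lemma exp_mul_two_pow_le_choose_of_half_le {E : ℝ} (hE : 0 < E) {k j : ℕ} (hkE : 64 * E ^ 2 ≤ k)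
    (hj : k ≤ 2 * j) (hjE : j - k / 2 ≤ E * √k) :
    Real.exp (-(8 * E ^ 2)) * (2 ^ k / (2 * √k)) ≤ k.choose j := by
  have hk_pos : (0 : ℝ) < k := lt_of_lt_of_le (by positivity) hkE
  have hk : 1 ≤ k := by exact_mod_cast hk_pos
  have hsqrt : √(k : ℝ) * √k = k := Real.mul_self_sqrt hk_pos.le
  have hE_le : 8 * E ≤ √k := Real.le_sqrt_of_sq_le (by linarith)
  obtain ⟨l, rfl⟩ : ∃ l, j = (k + 1) / 2 + l := ⟨j - (k + 1) / 2, by lia⟩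
  set m := (k + 1) / 2
  have hkm : (k : ℝ) ≤ 2 * m := by exact_mod_cast (by lia : k ≤ 2 * m)
  push_cast at hjE
  set d := 4 * E / √k with hd
  have hd_mul : d * √k = 4 * E := by rw [hd]; field_simp
  have hd_le : d ≤ 1 / 2 := by rw [hd, div_le_iff₀ (by positivity)]; linarith
  have hd_pos : 0 < d := by positivity
  have decay : Real.exp (-(8 * E ^ 2)) ≤ (1 - d) ^ l := by
    calc Real.exp (-(8 * E ^ 2)) ≤ Real.exp (-(2 * d)) ^ l := by
          rw [← Real.exp_nat_mul, Real.exp_le_exp]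
          nlinarith
      _ ≤ (1 - d) ^ l := by gcongr; exact exp_neg_two_mul_le_one_sub hd_pos.le hd_le
  have last_ratio : (1 - d) * (m + l) ≤ k + 1 - (m + l) := by
    have : 2 * E * √k ≤ d * (m + l) := by nlinarith
    linarith
  calc Real.exp (-(8 * E ^ 2)) * (2 ^ k / (2 * √k)) ≤ (1 - d) ^ l * k.choose m := by
        have : 0 ≤ 1 - d := by linarith
        gcongr
        exact two_pow_div_two_mul_sqrt_le_choose_half hk
    _ ≤ k.choose (m + l) := by
        rw [mul_comm]
        exact choose_mul_pow_le_choose_add (by linarith) last_ratio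

lemma exp_mul_two_pow_le_choose {E : ℝ} (hE : 0 < E) {k j : ℕ} (hkE : 64 * E ^ 2 ≤ k)
    (hj : j ≤ k) (hjE : |(j : ℝ) - k / 2| ≤ E * √k) :
    Real.exp (-(8 * E ^ 2)) * (2 ^ k / (2 * √k)) ≤ k.choose j := by
  rw [abs_le] at hjE
  rcases le_total k (2 * j) with h | h
  · exact exp_mul_two_pow_le_choose_of_half_le hE hkE h hjE.2
  · rw [← Nat.choose_symm hj]
    refine exp_mul_two_pow_le_choose_of_half_le hE hkE (by lia) ?_
    push_cast [hj]
    linarith [hjE.1]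

end Binomial

section OccurringEvents

variable {ι Ω : Type*} {B : ι → Set Ω}

open Classical in
/-- The set of indices in `S` whose event occurs at `ω`, for a family of events `B`. -/
noncomputable def occurring (B : ι → Set Ω) (S : Finset ι) (ω : Ω) : Finset ι :=
  {i ∈ S | ω ∈ B i}

open Classical in
lemma setOf_occurring_eq {S T : Finset ι} (hTS : T ⊆ S) :
    {ω | occurring B S ω = T} = ⋂ i ∈ S, if i ∈ T then B i else (B i)ᶜ := by
  ext ω
  simp only [occurring, Finset.ext_iff, Finset.mem_filter, Set.mem_ofPred_eq, Set.mem_iInter]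
  refine forall_congr' fun i => ?_
  by_cases hiT : i ∈ T
  · simp [hiT, hTS hiT]
  · simp [hiT]

variable [MeasurableSpace Ω] {ν : Measure Ω}

lemma measurable_card_occurring (hB : ∀ i, MeasurableSet (B i)) (S : Finset ι) :
    Measurable fun ω => (occurring B S ω).card := by
  classical
  simp only [occurring, Finset.card_filter]
  exact Finset.measurable_sum _ fun i _ =>
    Measurable.ite (hB i) measurable_const measurable_const

lemma measureReal_occurring_eq (hB : ∀ i, MeasurableSet (B i)) (hindep : iIndepSet B ν) {w : ℝ}
    (hw : ∀ i, ν.real (B i) = w) {S T : Finset ι} (hTS : T ⊆ S) :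
    ν.real {ω | occurring B S ω = T} = w ^ T.card * (1 - w) ^ (S.card - T.card) := by
  classical
  have := hindep.isProbabilityMeasure
  have measurable_factor (i : ι) :
      MeasurableSet[.generateFrom {B i}] (if i ∈ T then B i else (B i)ᶜ) := by
    have hBi : MeasurableSet[.generateFrom {B i}] (B i) := .basic _ rfl
    split_ifs
    · exact hBi
    · exact hBi.compl
  have measureReal_factor (i : ι) :
      ν.real (if i ∈ T then B i else (B i)ᶜ) = if i ∈ T then w else 1 - w := by
    split_ifs
    · exact hw i
    · rw [probReal_compl_eq_one_sub (hB i), hw]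
  rw [setOf_occurring_eq hTS, measureReal_def,
    (iIndepSet_iff _ _).1 hindep S fun i _ => measurable_factor i, ENNReal.toReal_prod]
  simp only [← measureReal_def, measureReal_factor]
  rw [Finset.prod_ite, Finset.prod_const, Finset.prod_const, Finset.filter_mem_eq_inter,
    Finset.inter_eq_right.2 hTS, Finset.filter_notMem_eq_sdiff, Finset.card_sdiff_of_subset hTS]

lemma measureReal_card_occurring_eq (hB : ∀ i, MeasurableSet (B i)) (hindep : iIndepSet B ν)
    {w : ℝ} (hw : ∀ i, ν.real (B i) = w) (S : Finset ι) (m : ℕ) :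
    ν.real {ω | (occurring B S ω).card = m} = S.card.choose m * w ^ m * (1 - w) ^ (S.card - m) := by
  classical
  have := hindep.isProbabilityMeasure
  have partition_by_set : {ω | (occurring B S ω).card = m} =
      ⋃ T ∈ Finset.powersetCard m S, {ω | occurring B S ω = T} := by
    ext ω
    simp [Finset.mem_powersetCard, occurring]
  rw [partition_by_set, measureReal_biUnion_finset]
  · rw [Finset.sum_congr rfl fun T hT => by
      rw [measureReal_occurring_eq hB hindep hw (Finset.mem_powersetCard.1 hT).1,
        (Finset.mem_powersetCard.1 hT).2]]
    simp [mul_assoc]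
  · intro T _ U _ hTU
    exact Set.disjoint_left.2 fun ω hT hU => hTU (hT.symm.trans hU)
  · intro T hT
    rw [setOf_occurring_eq (Finset.mem_powersetCard.1 hT).1]
    refine Finset.measurableSet_biInter _ fun i _ => ?_
    split_ifs
    · exact hB i
    · exact (hB i).compl

end OccurringEvents

section PoissonThinning

open scoped Nat in
lemma hasSum_poisson_mul_binomial (l w : ℝ) (m : ℕ) :
    HasSum (fun n : ℕ =>
        Real.exp (-l) * l ^ n / n ! * (n.choose m * w ^ m * (1 - w) ^ (n - m)))
      (Real.exp (-(l * w)) * (l * w) ^ m / m !) := by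
  have exp_series : HasSum (fun n : ℕ => (l * (1 - w)) ^ n / n !) (Real.exp (l * (1 - w))) := by
    rw [Real.exp_eq_exp_ℝ]
    exact NormedSpace.expSeries_div_hasSum_exp _
  have initial_zero : ∑ n ∈ Finset.range m,
      Real.exp (-l) * l ^ n / n ! * (n.choose m * w ^ m * (1 - w) ^ (n - m)) = 0 :=
    Finset.sum_eq_zero fun n hn => by simp [Nat.choose_eq_zero_of_lt (Finset.mem_range.1 hn)]
  rw [← hasSum_nat_add_iff' m, initial_zero, sub_zero]
  convert! exp_series.mul_left (Real.exp (-l) * (l * w) ^ m / m !) using 1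
  · ext n
    have factorials : ((n + m).choose m : ℝ) * n ! * m ! = (n + m)! := by
      exact_mod_cast Nat.add_choose_mul_factorial_mul_factorial n m
    rw [Nat.add_sub_cancel, ← factorials, mul_pow l (1 - w)]
    have : ((n + m).choose m : ℝ) ≠ 0 := by
      exact_mod_cast (Nat.choose_pos (Nat.le_add_left m n)).ne'
    field_simp
    ring
  · rw [show -(l * w) = -l + l * (1 - w) by ring, Real.exp_add]
    ring

variable {Ω : Type*} [MeasurableSpace Ω] {ν : Measure Ω} {B : ℕ → Set Ω}

open scoped Nat in
lemma measureReal_poissonMeasure_prod [IsFiniteMeasure ν] (l : NNReal) {A : Set (ℕ × Ω)}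
    (hA : MeasurableSet A) :
    ((poissonMeasure l).prod ν).real A =
      ∑' n : ℕ, Real.exp (-l) * l ^ n / n ! * ν.real (Prod.mk n ⁻¹' A) := by
  have integrable : Integrable (A.indicator (1 : ℕ × Ω → ℝ)) ((poissonMeasure l).prod ν) :=
    (integrable_const 1).indicator hA
  rw [← integral_indicator_one hA, integral_prod _ integrable, integral_poissonMeasure]
  refine tsum_congr fun n => ?_
  rw [smul_eq_mul, ← integral_indicator_one (hA.preimage measurable_prodMk_left)]
  rfl

lemma measurable_card_occurring_range (hB : ∀ i, MeasurableSet (B i)) :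
    Measurable fun ω : ℕ × Ω => (occurring B (Finset.range ω.1) ω.2).card :=
  measurable_from_prod_countable_right fun n => measurable_card_occurring hB (Finset.range n)

open scoped Nat in
lemma poissonMeasure_prod_card_occurring_eq (hB : ∀ i, MeasurableSet (B i))
    (hindep : iIndepSet B ν) {w : ℝ} (hw : ∀ i, ν.real (B i) = w) (l : NNReal) (m : ℕ) :
    ((poissonMeasure l).prod ν).real {ω | (occurring B (Finset.range ω.1) ω.2).card = m} =
      Real.exp (-(l * w)) * (l * w) ^ m / m ! := by
  have := hindep.isProbabilityMeasure
  have hmeas : MeasurableSet {ω : ℕ × Ω | (occurring B (Finset.range ω.1) ω.2).card = m} :=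
    measurable_card_occurring_range hB (measurableSet_singleton m)
  rw [measureReal_poissonMeasure_prod l hmeas]
  simp only [Set.preimage_ofPred_eq, measureReal_card_occurring_eq hB hindep hw, Finset.card_range]
  exact (hasSum_poisson_mul_binomial l w m).tsum_eq

/-- The probability that a Poisson variable with mean `x` is at least `2`. -/
noncomputable def poissonTwoLe (x : ℝ) : ℝ := 1 - (1 + x) * Real.exp (-x)

lemma poissonMeasure_prod_two_le_card_occurring (hB : ∀ i, MeasurableSet (B i))
    (hindep : iIndepSet B ν) {w : ℝ} (hw : ∀ i, ν.real (B i) = w) (l : NNReal) :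
    ((poissonMeasure l).prod ν).real {ω | 2 ≤ (occurring B (Finset.range ω.1) ω.2).card} =
      poissonTwoLe (l * w) := by
  have := hindep.isProbabilityMeasure
  set N : ℕ × Ω → ℕ := fun ω => (occurring B (Finset.range ω.1) ω.2).card
  have hN : Measurable N := measurable_card_occurring_range hB
  have compl_eq : {ω | 2 ≤ N ω} = ({ω | N ω = 0} ∪ {ω | N ω = 1})ᶜ := by
    ext ω
    simp only [Set.mem_ofPred_eq, Set.mem_compl_iff, Set.mem_union]
    lia
  have disjoint : Disjoint {ω | N ω = 0} {ω | N ω = 1} :=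
    Set.disjoint_left.2 fun ω h0 h1 => zero_ne_one (h0.symm.trans h1)
  have measurableSet_eq (m : ℕ) : MeasurableSet {ω | N ω = m} := hN (measurableSet_singleton m)
  rw [compl_eq, probReal_compl_eq_one_sub ((measurableSet_eq 0).union (measurableSet_eq 1)),
    measureReal_union disjoint (measurableSet_eq 1),
    poissonMeasure_prod_card_occurring_eq hB hindep hw,
    poissonMeasure_prod_card_occurring_eq hB hindep hw, poissonTwoLe]
  simp only [pow_zero, Nat.factorial, pow_one, Nat.cast_one]
  ring

end PoissonThinning

section Words

/-- The probability that a string of i.i.d. bits with `P(1) = p` starts with the word `r`. -/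
noncomputable def wordProb (p : ℝ) {k : ℕ} (r : Fin k → Bool) : ℝ := ∏ j, if r j then p else 1 - p

lemma sum_wordProb_succ {M : Type*} [AddCommMonoid M] (f : ℝ → M) (p : ℝ) (k : ℕ) :
    ∑ r : Fin (k + 1) → Bool, f (wordProb p r) =
      ∑ r : Fin k → Bool, (f (p * wordProb p r) + f ((1 - p) * wordProb p r)) := by
  rw [← (Fin.consEquiv fun _ : Fin (k + 1) => Bool).sum_comp, Fintype.sum_prod_type_right]
  refine Finset.sum_congr rfl fun r _ => ?_
  simp [wordProb, Fin.consEquiv, Fin.prod_univ_succ]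

lemma wordProb_decide_mem (p : ℝ) {k : ℕ} (s : Finset (Fin k)) :
    wordProb p (fun i => decide (i ∈ s)) = p ^ s.card * (1 - p) ^ (k - s.card) := by
  simp only [wordProb, decide_eq_true_eq]
  rw [Finset.prod_ite, Finset.prod_const, Finset.prod_const, Finset.filter_univ_mem,
    ← Finset.compl_filter, Finset.filter_univ_mem, Finset.card_compl, Fintype.card_fin]

lemma sum_wordProb_eq_sum_range {M : Type*} [AddCommMonoid M] (f : ℝ → M) (p : ℝ) (k : ℕ) :
    ∑ r : Fin k → Bool, f (wordProb p r) =
      ∑ j ∈ Finset.range (k + 1), k.choose j • f (p ^ j * (1 - p) ^ (k - j)) := by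
  have by_support : ∑ r : Fin k → Bool, f (wordProb p r) =
      ∑ s : Finset (Fin k), f (wordProb p fun i => decide (i ∈ s)) :=
    Finset.sum_nbij' (fun r => Finset.univ.filter fun i => r i = true) (fun s i => decide (i ∈ s))
      (by simp) (by simp) (by simp) (by simp) (by simp)
  simp only [by_support, wordProb_decide_mem]
  rw [← Finset.powerset_univ]
  simpa using Finset.sum_powerset_apply_card (fun j => f (p ^ j * (1 - p) ^ (k - j)))
    (x := (Finset.univ : Finset (Fin k)))

/-- The event that the `i`-th string starts with the word `r`. -/
def prefixEvent {k : ℕ} (r : Fin k → Bool) (i : ℕ) : Set (ℕ → ℕ → Bool) :=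
  {ω | ∀ j : Fin k, ω i j = r j}

lemma measurableSet_prefixEvent {k : ℕ} (r : Fin k → Bool) (i : ℕ) :
    MeasurableSet (prefixEvent r i) := by
  rw [prefixEvent, Set.ofPred_forall]
  refine MeasurableSet.iInter fun j => ?_
  have measurable_bit : Measurable fun ω : ℕ → ℕ → Bool => ω i j :=
    (measurable_pi_apply (j : ℕ)).comp (measurable_pi_apply i)
  exact measurable_bit (measurableSet_singleton (r j))

lemma prefCount_eq_card_occurring (ω : ℕ → ℕ → Bool) (n : ℕ) {k : ℕ} (r : Fin k → Bool) :
    prefCount ω n k r = (occurring (prefixEvent r) (Finset.range n) ω).card := by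
  simp only [prefCount, occurring, prefixEvent, Set.mem_ofPred_eq]
  congr

namespace IIDBits

variable {p : ℝ} {ν : Measure (ℕ → ℕ → Bool)}

lemma ofReal_le_one (hν : IIDBits p ν) (b : Bool) :
    ENNReal.ofReal (if b then p else 1 - p) ≤ 1 := by
  have := hν.1
  simpa using (hν.2 {(0, 0)} fun _ => b).symm.trans_le prob_le_one

lemma nonneg (hν : IIDBits p ν) : 0 ≤ p := by
  simpa using hν.ofReal_le_one false

lemma le_one (hν : IIDBits p ν) : p ≤ 1 := by
  simpa using hν.ofReal_le_one true

lemma measure_biInter_prefixEvent (hν : IIDBits p ν) {k : ℕ} (r : Fin k → Bool) (T : Finset ℕ) :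
    ν (⋂ i ∈ T, prefixEvent r i) = ENNReal.ofReal (wordProb p r) ^ T.card := by
  set b : ℕ × ℕ → Bool := fun s => if h : s.2 < k then r ⟨s.2, h⟩ else false
  have cylinder : ⋂ i ∈ T, prefixEvent r i =
      {ω | ∀ s ∈ T ×ˢ Finset.range k, ω s.1 s.2 = b s} := by
    ext ω
    simp only [prefixEvent, Set.mem_iInter, Set.mem_ofPred_eq, Finset.mem_product,
      Finset.mem_range, Prod.forall, b]
    constructor
    · rintro h i j ⟨hi, hj⟩
      simpa [hj] using h i hi ⟨j, hj⟩
    · intro h i hi j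
      simpa using h i j ⟨hi, j.2⟩
  have bit_nonneg (j : Fin k) : 0 ≤ if r j then p else 1 - p := by
    split_ifs <;> linarith [hν.nonneg, hν.le_one]
  rw [cylinder, hν.2, Finset.prod_product, ← Finset.prod_const, wordProb,
    ENNReal.ofReal_prod_of_nonneg fun j _ => bit_nonneg j]
  simp only [Finset.prod_range, Fin.is_lt, dite_true, b]

lemma measure_prefixEvent (hν : IIDBits p ν) {k : ℕ} (r : Fin k → Bool) (i : ℕ) :
    ν (prefixEvent r i) = ENNReal.ofReal (wordProb p r) := by
  simpa using hν.measure_biInter_prefixEvent r {i}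

lemma measureReal_prefixEvent (hν : IIDBits p ν) {k : ℕ} (r : Fin k → Bool) (i : ℕ) :
    ν.real (prefixEvent r i) = wordProb p r := by
  have wordProb_nonneg : 0 ≤ wordProb p r :=
    Finset.prod_nonneg fun j _ => by split_ifs <;> linarith [hν.nonneg, hν.le_one]
  rw [measureReal_def, hν.measure_prefixEvent, ENNReal.toReal_ofReal wordProb_nonneg]

lemma iIndepSet_prefixEvent (hν : IIDBits p ν) {k : ℕ} (r : Fin k → Bool) :
    iIndepSet (prefixEvent r) ν := by
  have := hν.1
  refine (iIndepSet_iff_meas_biInter (measurableSet_prefixEvent r)).2 fun T => ?_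
  simp only [hν.measure_biInter_prefixEvent, hν.measure_prefixEvent, Finset.prod_const]

lemma integral_fracFilledPo (hν : IIDBits p ν) (k : ℕ) (lam : NNReal) :
    ∫ ω, fracFilledPo k ω ∂poModel lam ν =
      (∑ r : Fin k → Bool, poissonTwoLe (lam * wordProb p r)) / 2 ^ k := by
  have := hν.1
  set filled : (Fin k → Bool) → Set (ℕ × (ℕ → ℕ → Bool)) := fun r =>
    {ω | 2 ≤ (occurring (prefixEvent r) (Finset.range ω.1) ω.2).card}
  have : IsProbabilityMeasure (poModel lam ν) := by unfold poModel; infer_instance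
  have measurableSet_filled (r) : MeasurableSet (filled r) :=
    measurable_card_occurring_range (measurableSet_prefixEvent r) measurableSet_Ici
  have integrable_indicator_one (r) :
      Integrable ((filled r).indicator (1 : ℕ × (ℕ → ℕ → Bool) → ℝ)) (poModel lam ν) :=
    (integrable_const 1).indicator (measurableSet_filled r)
  have fracFilledPo_eq (ω) :
      fracFilledPo k ω = (∑ r, (filled r).indicator (1 : ℕ × (ℕ → ℕ → Bool) → ℝ) ω) / 2 ^ k := by
    rw [fracFilledPo, fillCountPo, fillCount, Finset.card_filter, Nat.cast_sum]
    simp only [prefCount_eq_card_occurring, filled, Set.indicator_apply, Set.mem_ofPred_eq,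
      Pi.one_apply, Nat.cast_ite, Nat.cast_one, Nat.cast_zero]
  simp only [fracFilledPo_eq]
  rw [integral_div, integral_finsetSum _ fun r _ => integrable_indicator_one r]
  congr 1
  refine Finset.sum_congr rfl fun r _ => ?_
  rw [integral_indicator_one (measurableSet_filled r)]
  exact poissonMeasure_prod_two_le_card_occurring (measurableSet_prefixEvent r)
    (hν.iIndepSet_prefixEvent r) (hν.measureReal_prefixEvent r) lam

end IIDBits

end Words

section FillLoss

lemma strictMonoOn_poissonTwoLe : StrictMonoOn poissonTwoLe (Set.Ici 0) := by
  intro x hx y _ hxy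
  have hx : 0 ≤ x := hx
  have exp_gt : y - x + 1 < Real.exp (y - x) := Real.add_one_lt_exp (sub_ne_zero.2 hxy.ne')
  have h : (1 + y) * Real.exp (-y) < (1 + x) * Real.exp (-x) := by
    calc (1 + y) * Real.exp (-y) < (1 + x) * Real.exp (y - x) * Real.exp (-y) := by
          gcongr
          nlinarith
      _ = (1 + x) * Real.exp (-x) := by rw [mul_assoc, ← Real.exp_add]; ring_nf
  rw [poissonTwoLe, poissonTwoLe]
  linarith

/-- The contribution to `2 ^ k * (E X̄_k - E X̄_{k+1})` of a word of length `k` which is a prefix of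
`Po(x)` strings, each of which continues independently with `1` with probability `p`. -/
noncomputable def fillLoss (p x : ℝ) : ℝ :=
  poissonTwoLe x - (poissonTwoLe (p * x) + poissonTwoLe ((1 - p) * x)) / 2

lemma continuous_fillLoss (p : ℝ) : Continuous (fillLoss p) := by
  unfold fillLoss poissonTwoLe
  fun_prop

lemma fillLoss_pos {p x : ℝ} (hp0 : 0 < p) (hp1 : p < 1) (hx : 0 < x) : 0 < fillLoss p x := by
  have poissonTwoLe_mul_lt {a : ℝ} (ha0 : 0 ≤ a) (ha1 : a < 1) :
      poissonTwoLe (a * x) < poissonTwoLe x :=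
    strictMonoOn_poissonTwoLe (mul_nonneg ha0 hx.le) hx.le (mul_lt_of_lt_one_left hx ha1)
  have := poissonTwoLe_mul_lt hp0.le hp1
  have := poissonTwoLe_mul_lt (a := 1 - p) (by linarith) (by linarith)
  rw [fillLoss]
  linarith

lemma IIDBits.integral_fracFilledPo_sub_succ {p : ℝ} {ν : Measure (ℕ → ℕ → Bool)}
    (hν : IIDBits p ν) (k : ℕ) (lam : NNReal) :
    (∫ ω, fracFilledPo k ω ∂poModel lam ν) - ∫ ω, fracFilledPo (k + 1) ω ∂poModel lam ν =
      (∑ j ∈ Finset.range (k + 1), k.choose j * fillLoss p (lam * (p ^ j * (1 - p) ^ (k - j)))) /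
        2 ^ k := by
  simp only [← nsmul_eq_mul]
  rw [← sum_wordProb_eq_sum_range fun w => fillLoss p (lam * w), hν.integral_fracFilledPo,
    hν.integral_fracFilledPo, sum_wordProb_succ fun w => poissonTwoLe (lam * w), pow_succ']
  simp only [fillLoss, Finset.sum_sub_distrib, ← Finset.sum_div, mul_left_comm (lam : ℝ) p,
    mul_left_comm (lam : ℝ) (1 - p)]
  ring

lemma IIDBits.choose_mul_fillLoss_le_integral_sub {p : ℝ} {ν : Measure (ℕ → ℕ → Bool)}
    (hν : IIDBits p ν) (hp0 : 0 < p) (hp1 : p < 1) {lam : NNReal} (hlam : 0 < lam) {k j : ℕ}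
    (hj : j ≤ k) :
    k.choose j * fillLoss p (lam * (p ^ j * (1 - p) ^ (k - j))) / 2 ^ k ≤
      (∫ ω, fracFilledPo k ω ∂poModel lam ν) - ∫ ω, fracFilledPo (k + 1) ω ∂poModel lam ν := by
  have : 0 < 1 - p := sub_pos.2 hp1
  set term : ℕ → ℝ := fun i => k.choose i * fillLoss p (lam * (p ^ i * (1 - p) ^ (k - i)))
  have term_nonneg (i : ℕ) : 0 ≤ term i :=
    mul_nonneg (Nat.cast_nonneg _) (fillLoss_pos hp0 hp1 (by positivity)).le
  rw [hν.integral_fracFilledPo_sub_succ]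
  gcongr
  exact Finset.single_le_sum (f := term) (fun i _ => term_nonneg i) (Finset.mem_range_succ_iff.2 hj)

end FillLoss

section CriticalOnes

/-- The real number `x` of ones at which the expected number `l * p ^ x * q ^ (k - x)` of strings
starting with a word of length `k` is `1`. -/
noncomputable def criticalOnes (p q l k : ℝ) : ℝ :=
  -(Real.log l + k * Real.log q) / (Real.log p - Real.log q)

variable {p q : ℝ}

lemma log_mul_pow_mul_pow (hp : 0 < p) (hq : 0 < q) (hpq : p ≠ q) {l : ℝ} (hl : 0 < l) {j k : ℕ}
    (hj : j ≤ k) :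
    Real.log (l * (p ^ j * q ^ (k - j))) =
      (Real.log p - Real.log q) * (j - criticalOnes p q l k) := by
  have : Real.log p - Real.log q ≠ 0 := sub_ne_zero.2 (Real.log_injOn_pos.ne hp hq hpq)
  rw [Real.log_mul (by positivity) (by positivity), Real.log_mul (by positivity) (by positivity),
    Real.log_pow, Real.log_pow, Nat.cast_sub hj, criticalOnes]
  field_simp
  ring

lemma criticalOnes_sub_half (hp : 0 < p) (hq : 0 < q) (hpq : p ≠ q) (hpq1 : p * q ≠ 1) (l k : ℝ) :
    criticalOnes p q l k - k / 2 =
      Real.log (1 / √(p * q)) / (Real.log p - Real.log q) * (k - Real.logb (1 / √(p * q)) l) := by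
  have log_sub_ne : Real.log p - Real.log q ≠ 0 := sub_ne_zero.2 (Real.log_injOn_pos.ne hp hq hpq)
  have log_base : Real.log (1 / √(p * q)) = -(Real.log p + Real.log q) / 2 := by
    rw [one_div, Real.log_inv, Real.log_sqrt (by positivity), Real.log_mul hp.ne' hq.ne']
    ring
  have log_base_ne : Real.log (1 / √(p * q)) ≠ 0 := by
    have := Real.log_ne_zero_of_pos_of_ne_one (mul_pos hp hq) hpq1
    rw [log_base, ← Real.log_mul hp.ne' hq.ne']
    exact div_ne_zero (neg_ne_zero.2 this) two_ne_zero
  rw [div_mul_eq_mul_div, mul_sub, Real.logb, mul_div_cancel₀ _ log_base_ne, log_base, criticalOnes]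
  field_simp
  ring

lemma exists_nat_abs_sub_le_half {x : ℝ} {k : ℕ} {E : ℝ} (hk : 4 * E ^ 2 ≤ k)
    (hx : |x - k / 2| + 1 / 2 ≤ E * √k) :
    ∃ j ≤ k, |(j : ℝ) - k / 2| ≤ E * √k ∧ |(j : ℝ) - x| ≤ 1 / 2 := by
  have round_near : |(round x : ℝ) - x| ≤ 1 / 2 := by
    rw [abs_sub_comm]
    exact abs_sub_round x
  have round_near_half : |(round x : ℝ) - k / 2| ≤ E * √k := by
    linarith [abs_sub_le (round x : ℝ) x (k / 2)]
  have E_mul_sqrt_le : E * √k ≤ k / 2 := by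
    have : 2 * E ≤ √k := Real.le_sqrt_of_sq_le (by linarith)
    nlinarith [Real.mul_self_sqrt (Nat.cast_nonneg k : (0 : ℝ) ≤ k), Real.sqrt_nonneg (k : ℝ)]
  obtain ⟨lower, upper⟩ := abs_le.1 round_near_half
  obtain ⟨j, hj⟩ : ∃ j : ℕ, round x = j :=
    Int.eq_ofNat_of_zero_le (by exact_mod_cast (by linarith : (0 : ℝ) ≤ round x))
  simp only [hj, Int.cast_natCast] at round_near round_near_half upper
  exact ⟨j, by exact_mod_cast (by linarith : (j : ℝ) ≤ k), round_near_half, round_near⟩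

lemma exists_mul_pow_mul_pow_mem_Icc (hp : 0 < p) (hq : 0 < q) (hpq : p ≠ q) (hpq1 : p * q ≠ 1)
    {A : ℝ} (hA : 0 < A) :
    ∃ E > (0 : ℝ), ∃ M : ℝ, ∀ l : ℝ, 0 < l → ∀ k : ℕ, 4 * E ^ 2 ≤ k →
      |(k : ℝ) - Real.logb (1 / √(p * q)) l| ≤ A * √k →
        ∃ j ≤ k, |(j : ℝ) - k / 2| ≤ E * √k ∧
          l * (p ^ j * q ^ (k - j)) ∈ Set.Icc (Real.exp (-M)) (Real.exp M) := by
  set s := |Real.log (1 / √(p * q)) / (Real.log p - Real.log q)| with hs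
  have hE : 1 / 2 ≤ s * A + 1 / 2 := le_add_of_nonneg_left (by positivity)
  refine ⟨s * A + 1 / 2, by positivity, |Real.log p - Real.log q| / 2, fun l hl k hk hkl => ?_⟩
  have one_le_sqrt : 1 ≤ √(k : ℝ) := Real.one_le_sqrt.2 (by nlinarith)
  have criticalOnes_near : |criticalOnes p q l k - k / 2| + 1 / 2 ≤ (s * A + 1 / 2) * √k := by
    rw [criticalOnes_sub_half hp hq hpq hpq1, abs_mul, ← hs]
    nlinarith [mul_le_mul_of_nonneg_left hkl (abs_nonneg _ : 0 ≤ s)]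
  obtain ⟨j, hj, hj_half, hj_near⟩ :=
    exists_nat_abs_sub_le_half hk criticalOnes_near
  have abs_log_le : |Real.log (l * (p ^ j * q ^ (k - j)))| ≤ |Real.log p - Real.log q| / 2 := by
    rw [log_mul_pow_mul_pow hp hq hpq hl hj, abs_mul, div_eq_mul_one_div]
    gcongr
  have pos : 0 < l * (p ^ j * q ^ (k - j)) := by positivity
  exact ⟨j, hj, hj_half, (Real.le_log_iff_exp_le pos).1 (abs_le.1 abs_log_le).1,
    (Real.log_le_iff_le_exp pos).1 (abs_le.1 abs_log_le).2⟩

end CriticalOnes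

theorem expectation_fracFilledPo_gap_general
    (p q : ℝ) (hp0 : 0 < p) (hp1 : p < 1) (hp : p ≠ 1 / 2) (hq : q = 1 - p)
    (ν : Measure (ℕ → ℕ → Bool)) (hν : IIDBits p ν) :
    ∀ A > (0 : ℝ), ∃ c > (0 : ℝ), ∃ k₀ : ℕ, ∀ lam : NNReal, 0 < lam → ∀ k : ℕ, k₀ ≤ k →
      |(k : ℝ) - Real.logb (1 / Real.sqrt (p * q)) lam| ≤ A * Real.sqrt k →
        c / Real.sqrt k <
          (∫ ω, fracFilledPo k ω ∂poModel lam ν) -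
            ∫ ω, fracFilledPo (k + 1) ω ∂poModel lam ν := by
  subst hq
  intro A hA
  have hq0 : 0 < 1 - p := sub_pos.2 hp1
  obtain ⟨E, hE, M, exists_level⟩ := exists_mul_pow_mul_pow_mem_Icc hp0 hq0
    (fun h => hp (by linarith)) (by nlinarith : p * (1 - p) ≠ 1) hA
  obtain ⟨m, hm, le_fillLoss⟩ := isCompact_Icc.exists_forall_le'
    (continuous_fillLoss p).continuousOn (s := Set.Icc (Real.exp (-M)) (Real.exp M)) (a := 0)
    fun x hx => fillLoss_pos hp0 hp1 ((Real.exp_pos _).trans_le hx.1)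
  refine ⟨Real.exp (-(8 * E ^ 2)) * m / 4, by positivity, ⌈64 * E ^ 2⌉₊, ?_⟩
  intro lam hlam k hk hkl
  have hkE : 64 * E ^ 2 ≤ k := Nat.ceil_le.1 hk
  have hk0 : (0 : ℝ) < k := lt_of_lt_of_le (by positivity) hkE
  obtain ⟨j, hj, hj_half, hmem⟩ := exists_level lam hlam k (by linarith [sq_nonneg E]) hkl
  calc Real.exp (-(8 * E ^ 2)) * m / 4 / √k < Real.exp (-(8 * E ^ 2)) * m / 2 / √k := by
        gcongr
        norm_num
    _ = Real.exp (-(8 * E ^ 2)) * (2 ^ k / (2 * √k)) * m / 2 ^ k := by field_simp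
    _ ≤ k.choose j * fillLoss p (lam * (p ^ j * (1 - p) ^ (k - j))) / 2 ^ k := by
        gcongr
        exacts [exp_mul_two_pow_le_choose hE hkE hj hj_half, le_fillLoss _ hmem]
    _ ≤ _ := hν.choose_mul_fillLoss_le_integral_sub hp0 hp1 hlam hj

/-- Lemma 2 of Janson–Szpankowski: for `p ∈ (1/2, 1)` and any `A > 0`, if
`|k - log_{1/√(pq)} λ| ≤ A k^{1/2}` and `k` is large, then
`E X̄_k(λ) - E X̄_{k+1}(λ) > c k^{-1/2}`. -/
theorem expectation_fracFilledPo_gap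
    (p q : ℝ) (hp : 1 / 2 < p) (hp1 : p < 1) (hq : q = 1 - p)
    (ν : Measure (ℕ → ℕ → Bool)) (hν : IIDBits p ν) :
    ∀ A > (0 : ℝ), ∃ c > (0 : ℝ), ∃ k₀ : ℕ, ∀ lam : NNReal, 0 < lam → ∀ k : ℕ, k₀ ≤ k →
      |(k : ℝ) - Real.logb (1 / Real.sqrt (p * q)) lam| ≤ A * Real.sqrt k →
        c / Real.sqrt k <
          (∫ ω, fracFilledPo k ω ∂poModel lam ν) -
            ∫ ω, fracFilledPo (k + 1) ω ∂poModel lam ν :=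
  expectation_fracFilledPo_gap_general p q (by linarith) hp1 hp.ne' hq ν hν
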